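/- Suppose that for every complex number s with Re s > 1/2 and ξ(s) ≠ 0 one has Re(ξ'(s)/ξ(s)) > 0, where ξ(s) = s(s−1)π^{−s/2}Γ(s/2)ζ(s)/2. Then the Riemann Hypothesis holds: every zero ρ of ζ with 0 < Re ρ < 1 satisfies Re ρ = 1/2. -/

import Mathlib

open Complex Real

/-- The completed Riemann xi function `ξ(s) = s(s-1)π^{-s/2}Γ(s/2)ζ(s)/2`. -/
noncomputable def riemannXiFn (s : ℂ) : ℂ :=
  s * (s - 1) * (Real.pi : ℂ) ^ (-s / 2) * Complex.Gamma (s / 2) * riemannZeta s / 2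

theorem riemannXiFn_diffAt {s : ℂ} (h0 : 0 < s.re) (h1 : s.re < 1) :
    DifferentiableAt ℂ riemannXiFn s := by
  have hs1 : s ≠ 1 := by rintro rfl; simp at h1
  have hg : DifferentiableAt ℂ (fun s : ℂ => Complex.Gamma (s / 2)) s := by
    refine DifferentiableAt.comp (g := Complex.Gamma) s
      (Complex.differentiableAt_Gamma _ ?_) (by fun_prop)
    intro m hm
    have h := congrArg Complex.re hm
    simp at h
    have : (0 : ℝ) ≤ m := m.cast_nonneg
    linarith
  have hz := differentiableAt_riemannZeta hs1
  have hp : DifferentiableAt ℂ (fun s : ℂ => (Real.pi : ℂ) ^ (-s / 2)) s := by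
    refine DifferentiableAt.const_cpow (by fun_prop) (Or.inl ?_)
    exact_mod_cast Real.pi_ne_zero
  unfold riemannXiFn
  exact ((((by fun_prop : DifferentiableAt ℂ (fun s : ℂ => s * (s - 1)) s).mul hp).mul hg).mul
    hz).div_const 2

theorem zeta_zero_of_xi_zero {s : ℂ} (h0 : 0 < s.re) (h1 : s.re < 1)
    (h : riemannXiFn s = 0) : riemannZeta s = 0 := by
  have hs1 : s - 1 ≠ 0 := by
    intro h; rw [sub_eq_zero] at h; rw [h] at h1; simp at h1
  have hs0 : s ≠ 0 := by rintro rfl; simp at h0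
  have hg : Complex.Gamma (s / 2) ≠ 0 := by
    apply Complex.Gamma_ne_zero_of_re_pos
    simp; exact h0
  have hp : (Real.pi : ℂ) ^ (-s / 2) ≠ 0 := by
    simp [Complex.cpow_eq_zero_iff, Real.pi_ne_zero]
  simpa [riemannXiFn, hs1, hs0, hg, hp] using h

theorem right_half_zero_free
    (hpos : ∀ s : ℂ, 1 / 2 < s.re → riemannXiFn s ≠ 0 →
      0 < (deriv riemannXiFn s / riemannXiFn s).re)
    (ρ : ℂ) (hz : riemannZeta ρ = 0) (h0 : 1 / 2 < ρ.re) (h1 : ρ.re < 1) : False := by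
  set L : ℝ → ℂ := fun t => (t : ℂ) + ρ.im * I with hL
  have hLre : ∀ t, (L t).re = t := by intro t; simp [hL]
  have hLd : ∀ t, HasDerivAt L 1 t := fun t =>
    (Complex.ofRealCLM.hasDerivAt (x := t)).add_const _
  have hLρ : L ρ.re = ρ := by simp [hL]
  set g : ℝ → ℝ := fun t => ‖riemannXiFn (L t)‖ ^ 2 with hg
  have hgd : ∀ t, 1 / 2 < t → t < 1 → HasDerivAt g
      (2 * inner ℝ (riemannXiFn (L t)) (deriv riemannXiFn (L t))) t := by
    intro t ht ht1
    have hd := (riemannXiFn_diffAt (s := L t) (by rw [hLre]; linarith)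
      (by rw [hLre]; linarith)).hasDerivAt
    have := (hd.comp t (hLd t)).norm_sq
    simpa using this
  have hnn : ∀ t, 1 / 2 < t →
      0 ≤ 2 * inner ℝ (riemannXiFn (L t)) (deriv riemannXiFn (L t)) := by
    intro t ht
    by_cases hx : riemannXiFn (L t) = 0
    · simp [hx]
    · have h := hpos (L t) (by rw [hLre]; exact ht) hx
      have hsq : 0 < Complex.normSq (riemannXiFn (L t)) := Complex.normSq_pos.mpr hx
      rw [Complex.div_re, ← add_div] at h
      have h' := (div_pos_iff_of_pos_right hsq).mp h
      rw [Complex.inner]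
      simp only [Complex.mul_re, Complex.conj_re, Complex.conj_im]
      linarith
  have hmono : MonotoneOn g (Set.Ioo (1 / 2) 1) := by
    apply monotoneOn_of_deriv_nonneg (convex_Ioo _ _)
    · exact fun t ht => (hgd t ht.1 ht.2).continuousAt.continuousWithinAt
    · rw [interior_Ioo]
      exact fun t ht => (hgd t ht.1 ht.2).differentiableAt.differentiableWithinAt
    · rw [interior_Ioo]
      intro t ht
      rw [(hgd t ht.1 ht.2).deriv]
      exact hnn t ht.1
  have hzero : ∀ t, 1 / 2 < t → t < ρ.re → riemannZeta (L t) = 0 := by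
    intro t ht htr
    have hle := hmono ⟨ht, htr.trans h1⟩ ⟨h0, h1⟩ htr.le
    have hgρ : g ρ.re = 0 := by simp [hg, hLρ, riemannXiFn, hz]
    rw [hgρ] at hle
    have : ‖riemannXiFn (L t)‖ ^ 2 = 0 := le_antisymm hle (sq_nonneg _)
    apply zeta_zero_of_xi_zero (by rw [hLre]; linarith) (by rw [hLre]; linarith)
    simpa using this
  have hρ1 : ρ ≠ 1 := by rintro rfl; simp at h1
  have hfreq : ∃ᶠ z in nhdsWithin ρ {ρ}ᶜ, riemannZeta z = 0 := by
    have ht : Filter.Tendsto L (nhdsWithin ρ.re (Set.Iio ρ.re)) (nhdsWithin ρ {ρ}ᶜ) := by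
      apply tendsto_nhdsWithin_of_tendsto_nhds_of_eventually_within
      · have := (hLd ρ.re).continuousAt.tendsto
        rw [hLρ] at this
        exact this.mono_left nhdsWithin_le_nhds
      · filter_upwards [self_mem_nhdsWithin] with t ht heq
        have := congrArg Complex.re heq
        rw [hLre] at this
        exact absurd this (ne_of_lt ht)
    refine ht.frequently (Filter.Eventually.frequently ?_)
    filter_upwards [Ioo_mem_nhdsLT h0] with t ht using hzero t ht.1 ht.2
  have han : AnalyticOnNhd ℂ riemannZeta {1}ᶜ :=
    differentiableOn_riemannZeta.analyticOnNhd isOpen_compl_singleton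
  have hpre : IsPreconnected ({1}ᶜ : Set ℂ) :=
    (isConnected_compl_singleton_of_one_lt_rank (by simp [Complex.rank_real_complex]) 1).isPreconnected
  have := han.eqOn_zero_of_preconnected_of_frequently_eq_zero hpre hρ1 hfreq
    (show (0 : ℂ) ∈ ({1}ᶜ : Set ℂ) by simp)
  rw [riemannZeta_zero] at this
  norm_num at this

/-- Lagarias's criterion: if `Re(ξ'(s)/ξ(s)) > 0` for all `s` with `Re s > 1/2`
at which `ξ(s) ≠ 0`, then the Riemann Hypothesis holds. -/
theorem lagarias_positivity_implies_rh
    (hpos : ∀ s : ℂ, 1 / 2 < s.re → riemannXiFn s ≠ 0 →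
      0 < (deriv riemannXiFn s / riemannXiFn s).re) :
    ∀ ρ : ℂ, riemannZeta ρ = 0 → 0 < ρ.re → ρ.re < 1 → ρ.re = 1 / 2 := by
  intro ρ hz h0 h1
  rcases lt_trichotomy ρ.re (1 / 2) with h | h | h
  · exfalso
    refine right_half_zero_free hpos (1 - ρ) ?_ (by simp; linarith) (by simp; linarith)
    rw [riemannZeta_one_sub, hz, mul_zero]
    · intro n hn
      have h := congrArg Complex.re hn
      simp at h
      have : (0 : ℝ) ≤ n := n.cast_nonneg
      linarith
    · rintro rfl; simp at h1
  · exact h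
  · exact (right_half_zero_free hpos ρ hz h h1).elim
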